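/- Fix integers 0 ≤ r ≤ n. Let Φ : Sₙ → End_𝕜(K) be any monoid homomorphism (with End_𝕜(K) under composition) such that Φ sends the transposition (i, i+1) to Dᵢ⁺ for every 1 ≤ i ≤ n−1. For λ ∈ P_{r,n}, 1 ≤ i ≤ r and 1 ≤ j ≤ n−r, set ε_{i,j}(λ) = 1 if j ≤ λᵢ and ε_{i,j}(λ) = −1 otherwise, and set y_{i,j} = (x_{r+1−i} − x_{r+j})^{−1} ∈ K. Then ∑_{π ∈ S_r×S_{n−r}} Φ(π)( ∑_{λ ∈ P_{r,n}} ∏_{i=1}^{r} ∏_{j=1}^{n−r} (1 + ε_{i,j}(λ)·y_{i,j}) ) = n! (as an element of K), where S_r×S_{n−r} denotes the Young subgroup of Sₙ consisting of all permutations that preserve both {1,…,r} and {r+1,…,n}. -/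

import Mathlib

noncomputable section

open MvPolynomial

/-- The `i`-th variable `xᵢ`, regarded as an element of the field `K` of rational
functions (the fraction field of `MvPolynomial (Fin n) 𝕜`). -/
def ratVar (𝕜 : Type*) [Field 𝕜] (n : ℕ) (K : Type*) [Field K]
    [Algebra (MvPolynomial (Fin n) 𝕜) K] (i : Fin n) : K :=
  algebraMap (MvPolynomial (Fin n) 𝕜) K (X i)

/-- The `𝕜`-linear operator `f ↦ s f + (f - s f) * c⁻¹` (that is, `s + ∂` where
`∂ f = (f - s f)/c`). -/
def demazurePlusAux (𝕜 : Type*) [Field 𝕜] (K : Type*) [Field K] [Algebra 𝕜 K]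
    (s : K ≃ₐ[𝕜] K) (c : K) : Module.End 𝕜 K :=
  s.toLinearMap + (LinearMap.mulRight 𝕜 c⁻¹) ∘ₗ ((LinearMap.id : K →ₗ[𝕜] K) - s.toLinearMap)

/-- The operator `Dᵢ⁺ = sᵢ + ∂ᵢ` (0-indexed variables). -/
def DPlus (𝕜 : Type*) [Field 𝕜] {n : ℕ} (K : Type*) [Field K] [Algebra 𝕜 K]
    [Algebra (MvPolynomial (Fin n) 𝕜) K]
    (s : Equiv.Perm (Fin n) → (K ≃ₐ[𝕜] K)) (i : ℕ) (hi : i + 1 < n) : Module.End 𝕜 K :=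
  demazurePlusAux 𝕜 K (s (Equiv.swap ⟨i, Nat.lt_of_succ_lt hi⟩ ⟨i + 1, hi⟩))
    (ratVar 𝕜 n K ⟨i + 1, hi⟩ - ratVar 𝕜 n K ⟨i, Nat.lt_of_succ_lt hi⟩)

/-!
Each `Dᵢ⁺ = 1 + (1 - c⁻¹) (sᵢ - 1)`, where `c = x_{i+1} - x_i`, has its fixed vectors fixed by `sᵢ`,
and satisfies `∑ σ (g Dᵢ⁺ f) = ∑ σ (g f)` when `g = ∏ (1 + (x_j - x_i)⁻¹)` over the pairs `i < j`
within a block, because `sᵢ` fixes `g (1 - c⁻¹)`. A sum of `Φ π f` over the Young subgroup is fixed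
by all the `Dᵢ⁺` of that subgroup; averaging it against `g`, whose symmetrization is the order of
the subgroup, yields `∑ Φ π f = ∑ π (g f)`.

For the `f` at hand, the terms of `f` are indexed by the shuffles of the two blocks. Sorting the
terms of the symmetrization of `g f` by the variable that heads the shuffle gives a recursion in
which removing the head `a` costs the factor `∏ (1 + (z - a)⁻¹)` over the other variables `z`. These
factors add up to the number of variables by Lagrange interpolation, whence `n!`.
-/

section Symmetrization

variable {K ι κ α M : Type*} [Field K] [Fintype ι] [Fintype κ]

/-- The product of `1 + (z i - a)⁻¹` over all entries of `z`: the weight of placing `a` in front of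
the family `z`. Since `0⁻¹ = 0`, entries equal to `a` contribute the factor `1`, so `a` may itself
be an entry of `z`. -/
def headWeight (z : ι → K) (a : K) : K :=
  ∏ i, (1 + (z i - a)⁻¹)

theorem headWeight_comp_equiv (z : ι → K) (e : κ ≃ ι) (a : K) :
    headWeight (z ∘ e) a = headWeight z a :=
  Equiv.prod_comp e fun i => 1 + (z i - a)⁻¹

theorem headWeight_sumElim (x : ι → K) (y : κ → K) (a : K) :
    headWeight (Sum.elim x y) a = headWeight x a * headWeight y a := by
  simp [headWeight]

theorem headWeight_succ {n : ℕ} (x : Fin (n + 1) → K) (a : K) :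
    headWeight x a = (1 + (x 0 - a)⁻¹) * headWeight (Fin.tail x) a :=
  Fin.prod_univ_succ _

theorem headWeight_removeNth {n : ℕ} (x : Fin (n + 1) → K) (k : Fin (n + 1)) :
    headWeight (k.removeNth x) (x k) = headWeight x (x k) := by
  simp [headWeight, Fin.prod_univ_succAbove _ k, Fin.removeNth_apply]

open Lagrange in
open scoped Polynomial in
theorem sum_headWeight {z : ι → K} (hz : Function.Injective z) :
    ∑ k, headWeight z (z k) = (Fintype.card ι : K) := by
  classical
  cases isEmpty_or_nonempty ι
  · simp
  -- The sum is the Lagrange interpolation formula for the top coefficient of `P - Q`.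
  set P : K[X] := nodal Finset.univ z with hP
  set Q : K[X] := nodal Finset.univ fun i => z i + 1 with hQ
  have hdeg : (P - Q).degree < (Finset.univ : Finset ι).card := by
    rw [← degree_nodal (s := Finset.univ) (v := z)]
    exact Polynomial.degree_sub_lt_left (degree_nodal.trans degree_nodal.symm) nodal_ne_zero
      (nodal_monic.leadingCoeff.trans nodal_monic.leadingCoeff.symm)
  have htop : (P - Q).coeff ((Finset.univ : Finset ι).card - 1) = (Fintype.card ι : K) := by
    have hcard : 0 < (Finset.univ : Finset ι).card := Finset.card_pos.2 Finset.univ_nonempty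
    rw [Polynomial.coeff_sub, hP, hQ, nodal_eq, nodal_eq,
      Polynomial.prod_X_sub_C_coeff_card_pred _ z hcard,
      Polynomial.prod_X_sub_C_coeff_card_pred _ (fun i => z i + 1) hcard]
    simp [Finset.sum_add_distrib]
  have heval : ∀ k, (P - Q).eval (z k) = ∏ i ∈ Finset.univ.erase k, (z k - (z i + 1)) := by
    intro k
    rw [Polynomial.eval_sub, eval_nodal_at_node (Finset.mem_univ k), eval_nodal,
      ← Finset.mul_prod_erase _ _ (Finset.mem_univ k)]
    ring
  rw [← htop, coeff_eq_sum hz.injOn hdeg]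
  refine Finset.sum_congr rfl fun k _ => ?_
  rw [heval, ← Finset.prod_div_distrib, headWeight,
    ← Finset.mul_prod_erase _ _ (Finset.mem_univ k), sub_self, inv_zero, add_zero, one_mul]
  refine Finset.prod_congr rfl fun i hi => ?_
  have hki : z k - z i ≠ 0 := sub_ne_zero.2 (hz.ne (Finset.ne_of_mem_erase hi).symm)
  rw [← sub_sub, sub_div, div_self hki, one_div, ← neg_sub (z k), inv_neg, ← sub_eq_add_neg]

/-- The product of `1 + (x j - x i)⁻¹` over all `i < j`: the weight whose symmetrization over the
permutations of a block of variables is the order of the symmetric group of that block. -/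
def pairWeight {n : ℕ} (x : Fin n → K) : K :=
  ∏ i, ∏ j ∈ Finset.Ioi i, (1 + (x j - x i)⁻¹)

theorem map_pairWeight {L F : Type*} [Field L] [FunLike F K L] [RingHomClass F K L] (φ : F)
    {n : ℕ} (x : Fin n → K) : φ (pairWeight x) = pairWeight (φ ∘ x) := by
  simp [pairWeight]

theorem pairWeight_succ {n : ℕ} (x : Fin (n + 1) → K) :
    pairWeight x = headWeight (Fin.tail x) (x 0) * pairWeight (Fin.tail x) := by
  simp [pairWeight, headWeight, Fin.tail, Fin.prod_univ_succ, Fin.prod_Ioi_succ]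

theorem sum_perm_fin_succ [AddCommMonoid M] {n : ℕ} (x : Fin (n + 1) → α)
    (f : (Fin (n + 1) → α) → M) :
    ∑ σ : Equiv.Perm (Fin (n + 1)), f (x ∘ σ) =
      ∑ k, ∑ e : Equiv.Perm (Fin n), f (Fin.cons (x k) (k.removeNth x ∘ e)) := by
  let g (p : Fin (n + 1) × Equiv.Perm (Fin n)) : Equiv.Perm (Fin (n + 1)) :=
    p.1.cycleRange.symm * Equiv.Perm.decomposeFin.symm (0, p.2)
  have hg_zero (p) : g p 0 = p.1 := by simp [g]
  have hg_succ (p) (i : Fin n) : g p i.succ = p.1.succAbove (p.2 i) := by simp [g]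
  have hg : Function.Bijective g := by
    refine (Fintype.bijective_iff_injective_and_card g).2 ⟨fun p q hpq => ?_, ?_⟩
    · have hfst : p.1 = q.1 := by rw [← hg_zero p, hpq, hg_zero]
      refine Prod.ext hfst (Equiv.ext fun i => p.1.succAbove_right_injective ?_)
      rw [← hg_succ, hpq, hg_succ, hfst]
    · simp [Fintype.card_perm, Nat.factorial_succ]
  rw [← Fintype.sum_prod_type']
  refine (Fintype.sum_bijective g hg _ _ fun p => congrArg f (funext fun i => ?_)).symm
  cases i using Fin.cases with
  | zero => simp [hg_zero]
  | succ i => simp [hg_succ, Fin.removeNth_apply]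

theorem injective_removeNth {n : ℕ} {x : Fin (n + 1) → α} (hx : Function.Injective x)
    (k : Fin (n + 1)) : Function.Injective (k.removeNth x) :=
  hx.comp k.succAbove_right_injective

theorem sum_pairWeight_comp_perm {n : ℕ} {x : Fin n → K} (hx : Function.Injective x) :
    ∑ σ : Equiv.Perm (Fin n), pairWeight (x ∘ σ) = (n.factorial : K) := by
  induction n with
  | zero => simp [pairWeight]
  | succ n ih =>
    calc ∑ σ : Equiv.Perm (Fin (n + 1)), pairWeight (x ∘ σ)
        = ∑ k, ∑ e : Equiv.Perm (Fin n),
            headWeight x (x k) * pairWeight (k.removeNth x ∘ e) := by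
          rw [sum_perm_fin_succ x pairWeight]
          simp only [pairWeight_succ, Fin.cons_zero, Fin.tail_cons,
            headWeight_comp_equiv, headWeight_removeNth]
      _ = (∑ k, headWeight x (x k)) * (n.factorial : K) := by
          simp only [← Finset.mul_sum, ih (injective_removeNth hx _), Finset.sum_mul]
      _ = ((n + 1).factorial : K) := by
          rw [sum_headWeight hx, Fintype.card_fin, Nat.factorial_succ, Nat.cast_mul]

theorem tail_comp_swap_succ {n : ℕ} (x : Fin (n + 1) → α) (i j : Fin n) :
    Fin.tail (x ∘ Equiv.swap i.succ j.succ) = Fin.tail x ∘ Equiv.swap i j :=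
  funext fun k => congrArg x ((Fin.succ_injective n).swap_apply i j k)

theorem pairWeight_comp_swap {n : ℕ} (x : Fin n → K) {i j : Fin n} (hij : i ⋖ j) :
    pairWeight (x ∘ Equiv.swap i j) * (1 + (x j - x i)⁻¹) =
      pairWeight x * (1 - (x j - x i)⁻¹) := by
  induction n with
  | zero => exact i.elim0
  | succ n ih =>
    rw [Fin.covBy_iff, Nat.covBy_iff_add_one_eq] at hij
    cases j using Fin.cases with
    | zero => simp at hij
    | succ j =>
    cases i using Fin.cases with
    | zero =>
      cases n with
      | zero => exact j.elim0
      | succ n =>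
        obtain rfl : j = 0 := Fin.ext (by simpa using hij.symm)
        have htail : Fin.tail (Fin.tail (x ∘ Equiv.swap 0 (Fin.succ 0))) =
            Fin.tail (Fin.tail x) := by
          funext k
          exact congrArg x (Equiv.swap_apply_of_ne_of_ne (by simp) (by simp [Fin.ext_iff]))
        have hneg : (x 0 - x (Fin.succ 0))⁻¹ = -(x (Fin.succ 0) - x 0)⁻¹ := by
          rw [← inv_neg, neg_sub]
        simp only [pairWeight_succ, headWeight_succ, htail]
        simp only [Fin.tail, Function.comp_apply, Equiv.swap_apply_left, Equiv.swap_apply_right,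
          hneg]
        ring
    | succ i =>
      have hzero : Equiv.swap i.succ j.succ 0 = 0 :=
        Equiv.swap_apply_of_ne_of_ne (Fin.succ_ne_zero i).symm (Fin.succ_ne_zero j).symm
      have htail := ih (Fin.tail x) (i := i) (j := j) (by simpa using hij)
      rw [pairWeight_succ, pairWeight_succ x, tail_comp_swap_succ, headWeight_comp_equiv,
        Function.comp_apply, hzero, mul_assoc, mul_assoc]
      exact congrArg _ htail

/-- The sum over all shuffles of `x` and `y` of the products of `1 + (b - a)⁻¹` over all pairs
consisting of one entry of `x` and one entry of `y`, where `a` comes before `b` in the shuffle.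
A shuffle is encoded by the function `lam` for which `lam i` entries of `y` come before `x i`. -/
def shuffleSum {r m : ℕ} (x : Fin r → K) (y : Fin m → K) : K :=
  ∑ lam : Fin r → Fin (m + 1) with Monotone lam, ∏ i, ∏ j : Fin m,
    (1 + (if (j : ℕ) < (lam i : ℕ) then (1 : K) else -1) * (x i - y j)⁻¹)

theorem map_shuffleSum {L F : Type*} [Field L] [FunLike F K L] [RingHomClass F K L] (φ : F)
    {r m : ℕ} (x : Fin r → K) (y : Fin m → K) :
    φ (shuffleSum x y) = shuffleSum (φ ∘ x) (φ ∘ y) := by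
  simp [shuffleSum, apply_ite φ]

theorem sum_antitone_eq_shuffleSum {r m : ℕ} (x : Fin r → K) (y : Fin m → K) :
    ∑ lam : Fin r → Fin (m + 1) with ∀ a b, a ≤ b → (lam b : ℕ) ≤ (lam a : ℕ),
      ∏ i, ∏ j : Fin m,
        (1 + (if (j : ℕ) < (lam i : ℕ) then (1 : K) else -1) * (x i.rev - y j)⁻¹) =
      shuffleSum x y := by
  refine Finset.sum_equiv (Equiv.arrowCongr Fin.revPerm (Equiv.refl _)) (fun lam => ?_)
    fun lam _ => ?_
  · simp only [Finset.mem_filter_univ]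
    exact ⟨fun h a b hab => h _ _ (Fin.rev_le_rev.2 hab),
      fun h a b hab => by simpa using h (Fin.rev_le_rev.2 hab)⟩
  · rw [← Equiv.prod_comp Fin.revPerm]
    simp

theorem shuffleSum_zero_left {m : ℕ} (x : Fin 0 → K) (y : Fin m → K) : shuffleSum x y = 1 := by
  rw [shuffleSum, Finset.filter_true_of_mem fun _ _ => Subsingleton.monotone _]
  simp

theorem shuffleSum_zero_right {r : ℕ} (x : Fin r → K) (y : Fin 0 → K) : shuffleSum x y = 1 := by
  rw [shuffleSum, Finset.filter_true_of_mem fun l _ _ _ _ => Fin.le_def.2 (by simp)]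
  simp

theorem monotone_cons_zero {r m : ℕ} {l : Fin r → Fin (m + 1)} (hl : Monotone l) :
    Monotone (Fin.cons 0 l : Fin (r + 1) → Fin (m + 1)) := by
  intro a b hab
  cases a using Fin.cases with
  | zero => simp
  | succ a =>
    cases b using Fin.cases with
    | zero => exact absurd hab (by simp)
    | succ b => simpa using hl (Fin.succ_le_succ_iff.1 hab)

theorem sum_monotone_apply_zero_eq_zero [AddCommMonoid M] {r m : ℕ}
    (f : (Fin (r + 1) → Fin (m + 1)) → M) :
    ∑ l with Monotone l ∧ l 0 = 0, f l = ∑ l with Monotone l, f (Fin.cons 0 l) := by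
  symm
  refine Finset.sum_bij (fun l _ => Fin.cons 0 l) ?_ ?_ ?_ fun _ _ => rfl
  · simpa using fun l hl => monotone_cons_zero hl
  · exact fun l _ l' _ h => (Fin.cons_inj.1 h).2
  · simp only [Finset.mem_filter_univ]
    refine fun l hl => ⟨Fin.tail l, hl.1.comp Fin.strictMono_succ.monotone, ?_⟩
    rw [← hl.2, Fin.cons_self_tail]

theorem sum_monotone_apply_zero_ne_zero [AddCommMonoid M] {r m : ℕ}
    (f : (Fin (r + 1) → Fin (m + 2)) → M) :
    ∑ l with Monotone l ∧ ¬l 0 = 0, f l =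
      ∑ l : Fin (r + 1) → Fin (m + 1) with Monotone l, f (Fin.succ ∘ l) := by
  symm
  refine Finset.sum_bij (fun l _ => Fin.succ ∘ l) ?_ ?_ ?_ fun _ _ => rfl
  · simpa using fun l hl => Fin.strictMono_succ.monotone.comp hl
  · exact fun l _ l' _ h => (Fin.succ_injective _).comp_left h
  · simp only [Finset.mem_filter_univ]
    intro l hl
    have hne : ∀ i, l i ≠ 0 := fun i =>
      ((Fin.pos_of_ne_zero hl.2).trans_le (hl.1 (Fin.zero_le i))).ne'
    exact ⟨fun i => (l i).pred (hne i), fun a b hab => Fin.pred_le_pred_iff.2 (hl.1 hab),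
      funext fun i => Fin.succ_pred _ _⟩

/-- A shuffle starts either with the first entry of `x` or with the first entry of `y`. -/
theorem shuffleSum_succ_succ {r m : ℕ} (x : Fin (r + 1) → K) (y : Fin (m + 1) → K) :
    shuffleSum x y =
      headWeight y (x 0) * shuffleSum (Fin.tail x) y +
        headWeight x (y 0) * shuffleSum x (Fin.tail y) := by
  rw [shuffleSum, ← Finset.sum_filter_add_sum_filter_not _ fun lam => lam 0 = 0,
    Finset.filter_filter, Finset.filter_filter, sum_monotone_apply_zero_eq_zero,
    sum_monotone_apply_zero_ne_zero, shuffleSum, shuffleSum, Finset.mul_sum, Finset.mul_sum]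
  congr 1
  · refine Finset.sum_congr rfl fun l _ => ?_
    have hneg (j) : -(x 0 - y j)⁻¹ = (y j - x 0)⁻¹ := by rw [← inv_neg, neg_sub]
    simp [Fin.prod_univ_succ (n := r), headWeight, Fin.tail, hneg]
  · refine Finset.sum_congr rfl fun l _ => ?_
    simp only [Fin.prod_univ_succ (n := m), Function.comp_apply, Fin.val_zero, Fin.val_succ,
      Nat.succ_pos, Nat.add_lt_add_iff_right, if_true, one_mul, Finset.prod_mul_distrib]
    rfl

theorem shuffleSum_comm {r m : ℕ} (x : Fin r → K) (y : Fin m → K) :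
    shuffleSum x y = shuffleSum y x := by
  induction r generalizing m with
  | zero => rw [shuffleSum_zero_left, shuffleSum_zero_right]
  | succ r ihr =>
    induction m with
    | zero => rw [shuffleSum_zero_left, shuffleSum_zero_right]
    | succ m ihm => rw [shuffleSum_succ_succ, shuffleSum_succ_succ y, ihr, ihm, add_comm]

/-- The symmetrization of `pairWeight x * pairWeight y * shuffleSum x y` over the permutations of
`x` and of `y`. -/
def youngSum {r m : ℕ} (x : Fin r → K) (y : Fin m → K) : K :=
  ∑ σ : Equiv.Perm (Fin r), ∑ τ : Equiv.Perm (Fin m),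
    pairWeight (x ∘ σ) * pairWeight (y ∘ τ) * shuffleSum (x ∘ σ) (y ∘ τ)

theorem sum_perm_headWeight_mul_shuffleSum_tail {r m : ℕ} (x : Fin (r + 1) → K) (y : Fin m → K) :
    ∑ σ : Equiv.Perm (Fin (r + 1)), ∑ τ : Equiv.Perm (Fin m),
        pairWeight (x ∘ σ) * pairWeight (y ∘ τ) *
          (headWeight (y ∘ τ) ((x ∘ σ) 0) * shuffleSum (Fin.tail (x ∘ σ)) (y ∘ τ)) =
      ∑ k, headWeight (Sum.elim x y) (x k) * youngSum (k.removeNth x) y := by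
  rw [sum_perm_fin_succ x fun z => ∑ τ : Equiv.Perm (Fin m),
    pairWeight z * pairWeight (y ∘ τ) *
      (headWeight (y ∘ τ) (z 0) * shuffleSum (Fin.tail z) (y ∘ τ))]
  simp only [pairWeight_succ, Fin.cons_zero, Fin.tail_cons, headWeight_comp_equiv,
    headWeight_removeNth, headWeight_sumElim, youngSum, Finset.mul_sum]
  refine Finset.sum_congr rfl fun k _ => Finset.sum_congr rfl fun σ _ =>
    Finset.sum_congr rfl fun τ _ => ?_
  ring

theorem youngSum_comm {r m : ℕ} (x : Fin r → K) (y : Fin m → K) :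
    youngSum x y = youngSum y x := by
  rw [youngSum, Finset.sum_comm]
  simp only [youngSum, shuffleSum_comm (x ∘ _), mul_comm (pairWeight (x ∘ _))]

theorem youngSum_succ_succ {r m : ℕ} (x : Fin (r + 1) → K) (y : Fin (m + 1) → K) :
    youngSum x y =
      ∑ k, headWeight (Sum.elim x y) (x k) * youngSum (k.removeNth x) y +
        ∑ k, headWeight (Sum.elim x y) (y k) * youngSum x (k.removeNth y) := by
  have hhead (a : K) : headWeight (Sum.elim x y) a = headWeight (Sum.elim y x) a := by
    rw [headWeight_sumElim, headWeight_sumElim, mul_comm]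
  rw [youngSum]
  simp only [shuffleSum_succ_succ, mul_add, Finset.sum_add_distrib]
  congr 1
  · exact sum_perm_headWeight_mul_shuffleSum_tail x y
  · rw [Finset.sum_comm]
    simp only [shuffleSum_comm (x ∘ _), mul_comm (pairWeight (x ∘ _)), hhead, youngSum_comm x]
    exact sum_perm_headWeight_mul_shuffleSum_tail y x

theorem youngSum_zero_left {m : ℕ} (x : Fin 0 → K) {y : Fin m → K} (hy : Function.Injective y) :
    youngSum x y = (m.factorial : K) := by
  have hpair (z : Fin 0 → K) : pairWeight z = 1 := Fin.prod_univ_zero _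
  simp [youngSum, shuffleSum_zero_left, hpair, sum_pairWeight_comp_perm hy]

theorem youngSum_eq_factorial {r m : ℕ} {x : Fin r → K} {y : Fin m → K}
    (hxy : Function.Injective (Sum.elim x y)) : youngSum x y = ((r + m).factorial : K) := by
  induction r generalizing m with
  | zero =>
    rw [youngSum_zero_left x (Sum.elim_injective.1 hxy).2.1, zero_add]
  | succ r ihr =>
    induction m with
    | zero => rw [youngSum_comm, youngSum_zero_left y (Sum.elim_injective.1 hxy).1, add_zero]
    | succ m ihm =>
      obtain ⟨hx, hy, hne⟩ := Sum.elim_injective.1 hxy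
      have hxk (k : Fin (r + 1)) : youngSum (k.removeNth x) y = ((r + m + 1).factorial : K) :=
        ihr (Sum.elim_injective.2 ⟨injective_removeNth hx k, hy, fun _ => hne _⟩)
      have hyk (k : Fin (m + 1)) : youngSum x (k.removeNth y) = ((r + m + 1).factorial : K) := by
        rw [ihm (Sum.elim_injective.2 ⟨hx, injective_removeNth hy k, fun i _ => hne i _⟩),
          Nat.add_right_comm]
      have hhead := sum_headWeight hxy
      simp only [Fintype.sum_sum_type, Sum.elim_inl, Sum.elim_inr, Fintype.card_sum,
        Fintype.card_fin] at hhead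
      simp only [youngSum_succ_succ, hxk, hyk, ← Finset.sum_mul]
      rw [← add_mul, hhead, show r + 1 + (m + 1) = r + m + 1 + 1 by omega,
        Nat.factorial_succ (r + m + 1), Nat.cast_mul]

end Symmetrization

section DemazurePlus

variable {𝕜 K : Type*} [Field 𝕜] [Field K] [Algebra 𝕜 K]

theorem demazurePlusAux_apply (σ : K ≃ₐ[𝕜] K) (c f : K) :
    demazurePlusAux 𝕜 K σ c f = f + (1 - c⁻¹) * (σ f - f) := by
  simp only [demazurePlusAux, LinearMap.add_apply, LinearMap.comp_apply, LinearMap.sub_apply,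
    LinearMap.id_apply, LinearMap.mulRight_apply, AlgEquiv.toLinearMap_apply]
  ring

theorem apply_eq_of_demazurePlusAux_eq [NeZero (2 : K)] {σ : K ≃ₐ[𝕜] K} {c f : K} (hc : σ c = -c)
    (hf : demazurePlusAux 𝕜 K σ c f = f) : σ f = f := by
  have hc_ne : c ≠ 1 := by
    rintro rfl
    rw [map_one, eq_neg_iff_add_eq_zero, one_add_one_eq_two] at hc
    exact two_ne_zero hc
  rw [demazurePlusAux_apply, add_eq_left, mul_eq_zero, sub_eq_zero, eq_comm, inv_eq_one] at hf
  exact sub_eq_zero.1 (hf.resolve_left hc_ne)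

/-- `g D = g + (σ - 1) g u` with `u = 1 - c⁻¹`, since `σ` fixes `g u`. -/
theorem mul_demazurePlusAux_apply {σ : K ≃ₐ[𝕜] K} {c g : K} (hc : σ c = -c)
    (hg : σ g * (1 + c⁻¹) = g * (1 - c⁻¹)) (f : K) :
    g * demazurePlusAux 𝕜 K σ c f =
      g * f + (σ (g * (1 - c⁻¹) * f) - g * (1 - c⁻¹) * f) := by
  have hgu : σ (g * (1 - c⁻¹)) = g * (1 - c⁻¹) := by
    rw [map_mul, map_sub, map_one, map_inv₀, hc, inv_neg, sub_neg_eq_add, hg]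
  rw [demazurePlusAux_apply, map_mul σ (g * _), hgu]
  ring

variable {H : Type*} [Group H]

/-- The element `a` of `H` acts through `Ψ` by a Demazure operator `D⁺` over the automorphism `t a`,
and `t a` transforms `g` by the factor that cancels the deviation of this operator from `t a`. -/
def IsDemazureGenerator (t : H →* (K ≃ₐ[𝕜] K)) (Ψ : H →* Module.End 𝕜 K) (g : K) (a : H) : Prop :=
  ∃ c : K, t a c = -c ∧ Ψ a = demazurePlusAux 𝕜 K (t a) c ∧
    t a g * (1 + c⁻¹) = g * (1 - c⁻¹)

variable {t : H →* (K ≃ₐ[𝕜] K)} {Ψ : H →* Module.End 𝕜 K} {g : K}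

theorem apply_eq_of_forall_demazure_apply_eq [NeZero (2 : K)]
    (hgen : Submonoid.closure {a | IsDemazureGenerator t Ψ g a} = ⊤) {f : K}
    (hf : ∀ a, Ψ a f = f) (a : H) : t a f = f := by
  induction hgen ▸ Submonoid.mem_top a using Submonoid.closure_induction with
  | mem a ha =>
    obtain ⟨c, hc, hΨ, -⟩ := ha
    exact apply_eq_of_demazurePlusAux_eq hc (hΨ ▸ hf a)
  | one => simp
  | mul a b _ _ ha hb => rw [map_mul, AlgEquiv.mul_apply, hb, ha]

variable [Fintype H]

theorem sum_apply_mul_demazure_apply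
    (hgen : Submonoid.closure {a | IsDemazureGenerator t Ψ g a} = ⊤) (a : H) (f : K) :
    ∑ b, t b (g * Ψ a f) = ∑ b, t b (g * f) := by
  induction hgen ▸ Submonoid.mem_top a using Submonoid.closure_induction generalizing f with
  | mem a ha =>
    obtain ⟨c, hc, hΨ, hg⟩ := ha
    have hshift (h : K) : ∑ b, t b (t a h) = ∑ b, t b h := by
      simpa using Equiv.sum_comp (Equiv.mulRight a) fun b => t b h
    simp only [hΨ, mul_demazurePlusAux_apply hc hg, map_add, map_sub, Finset.sum_add_distrib,
      Finset.sum_sub_distrib]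
    rw [hshift, sub_self, add_zero]
  | one => simp
  | mul a b _ _ ha hb => rw [map_mul, Module.End.mul_apply, ha, hb]

theorem sum_demazure_apply_eq_sum_apply_mul [CharZero K]
    (hgen : Submonoid.closure {a | IsDemazureGenerator t Ψ g a} = ⊤)
    (hg : ∑ a, t a g = (Fintype.card H : K)) (f : K) :
    ∑ a, Ψ a f = ∑ a, t a (g * f) := by
  have hinv (a : H) : t a (∑ b, Ψ b f) = ∑ b, Ψ b f := by
    refine apply_eq_of_forall_demazure_apply_eq hgen (fun a => ?_) a
    simpa using Equiv.sum_comp (Equiv.mulLeft a) fun b => Ψ b f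
  have hcard : (Fintype.card H : K) ≠ 0 := Nat.cast_ne_zero.2 Fintype.card_ne_zero
  refine mul_left_cancel₀ hcard ?_
  calc (Fintype.card H : K) * ∑ a, Ψ a f
      = ∑ b, t b (g * ∑ a, Ψ a f) := by
        simp only [← hg, Finset.sum_mul, map_mul, hinv]
    _ = ∑ a, ∑ b, t b (g * Ψ a f) := by
        simp only [Finset.mul_sum, map_sum]
        exact Finset.sum_comm
    _ = (Fintype.card H : K) * ∑ a, t a (g * f) := by
        simp only [sum_apply_mul_demazure_apply hgen, Finset.sum_const, Finset.card_univ,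
          nsmul_eq_mul]

end DemazurePlus

section YoungSubgroup

theorem mclosure_swap_covBy (n : ℕ) :
    Submonoid.closure {σ : Equiv.Perm (Fin n) | ∃ i j, i ⋖ j ∧ σ = Equiv.swap i j} = ⊤ := by
  cases n with
  | zero => exact Subsingleton.elim _ _
  | succ n =>
    rw [eq_top_iff, ← Equiv.Perm.mclosure_swap_castSucc_succ n]
    refine Submonoid.closure_mono ?_
    rintro _ ⟨i, rfl⟩
    exact ⟨_, _, Fin.covBy_iff.2 (by simp), rfl⟩

theorem mclosure_inl_union_inr_eq_top {M N : Type*} [Monoid M] [Monoid N] {s : Set M} {t : Set N}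
    (hs : Submonoid.closure s = ⊤) (ht : Submonoid.closure t = ⊤) :
    Submonoid.closure (MonoidHom.inl M N '' s ∪ MonoidHom.inr M N '' t) = ⊤ := by
  rw [Submonoid.closure_union, ← MonoidHom.map_mclosure, ← MonoidHom.map_mclosure, hs, ht,
    eq_top_iff, ← Submonoid.top_prod_top, Submonoid.prod_le_iff]
  exact ⟨le_sup_left, le_sup_right⟩

variable {𝕜 K : Type*} [Field 𝕜] [Field K] [Algebra 𝕜 K] {r m : ℕ} {x : Fin r → K} {y : Fin m → K}
  {t : Equiv.Perm (Fin r) × Equiv.Perm (Fin m) →* (K ≃ₐ[𝕜] K)}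
  {Ψ : Equiv.Perm (Fin r) × Equiv.Perm (Fin m) →* Module.End 𝕜 K}

theorem apply_pairWeight_mul_pairWeight (htx : ∀ a i, t a (x i) = x (a.1 i))
    (hty : ∀ a j, t a (y j) = y (a.2 j)) (a : Equiv.Perm (Fin r) × Equiv.Perm (Fin m)) :
    t a (pairWeight x * pairWeight y) = pairWeight (x ∘ a.1) * pairWeight (y ∘ a.2) := by
  rw [map_mul, map_pairWeight, map_pairWeight, show t a ∘ x = x ∘ a.1 from funext (htx a),
    show t a ∘ y = y ∘ a.2 from funext (hty a)]

theorem mclosure_isDemazureGenerator_eq_top (htx : ∀ a i, t a (x i) = x (a.1 i))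
    (hty : ∀ a j, t a (y j) = y (a.2 j))
    (hΨx : ∀ i j, i ⋖ j → Ψ (Equiv.swap i j, 1) =
      demazurePlusAux 𝕜 K (t (Equiv.swap i j, 1)) (x j - x i))
    (hΨy : ∀ i j, i ⋖ j → Ψ (1, Equiv.swap i j) =
      demazurePlusAux 𝕜 K (t (1, Equiv.swap i j)) (y j - y i)) :
    Submonoid.closure {a | IsDemazureGenerator t Ψ (pairWeight x * pairWeight y) a} = ⊤ := by
  rw [eq_top_iff, ← mclosure_inl_union_inr_eq_top (mclosure_swap_covBy r) (mclosure_swap_covBy m)]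
  refine Submonoid.closure_mono ?_
  rintro _ (⟨_, ⟨i, j, hij, rfl⟩, rfl⟩ | ⟨_, ⟨i, j, hij, rfl⟩, rfl⟩)
  · refine ⟨x j - x i, by simp [htx], hΨx i j hij, ?_⟩
    rw [apply_pairWeight_mul_pairWeight htx hty]
    simp only [MonoidHom.inl_apply, Equiv.Perm.coe_one, Function.comp_id]
    linear_combination pairWeight y * pairWeight_comp_swap x hij
  · refine ⟨y j - y i, by simp [hty], hΨy i j hij, ?_⟩
    rw [apply_pairWeight_mul_pairWeight htx hty]
    simp only [MonoidHom.inr_apply, Equiv.Perm.coe_one, Function.comp_id]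
    linear_combination pairWeight x * pairWeight_comp_swap y hij

theorem sum_demazure_apply_shuffleSum [CharZero K] (hxy : Function.Injective (Sum.elim x y))
    (htx : ∀ a i, t a (x i) = x (a.1 i)) (hty : ∀ a j, t a (y j) = y (a.2 j))
    (hΨx : ∀ i j, i ⋖ j → Ψ (Equiv.swap i j, 1) =
      demazurePlusAux 𝕜 K (t (Equiv.swap i j, 1)) (x j - x i))
    (hΨy : ∀ i j, i ⋖ j → Ψ (1, Equiv.swap i j) =
      demazurePlusAux 𝕜 K (t (1, Equiv.swap i j)) (y j - y i)) :
    ∑ a, Ψ a (shuffleSum x y) = ((r + m).factorial : K) := by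
  obtain ⟨hx, hy, -⟩ := Sum.elim_injective.1 hxy
  have hcard : ∑ a, t a (pairWeight x * pairWeight y) =
      (Fintype.card (Equiv.Perm (Fin r) × Equiv.Perm (Fin m)) : K) := by
    simp only [apply_pairWeight_mul_pairWeight htx hty, Fintype.sum_prod_type, ← Finset.mul_sum,
      ← Finset.sum_mul, sum_pairWeight_comp_perm hx, sum_pairWeight_comp_perm hy]
    simp [Fintype.card_perm]
  have hshuffle (a) : t a (shuffleSum x y) = shuffleSum (x ∘ a.1) (y ∘ a.2) := by
    rw [map_shuffleSum, show t a ∘ x = x ∘ a.1 from funext (htx a),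
      show t a ∘ y = y ∘ a.2 from funext (hty a)]
  rw [sum_demazure_apply_eq_sum_apply_mul
    (mclosure_isDemazureGenerator_eq_top htx hty hΨx hΨy) hcard]
  simp only [map_mul _ (_ * _), apply_pairWeight_mul_pairWeight htx hty, hshuffle,
    Fintype.sum_prod_type]
  exact youngSum_eq_factorial hxy

/-- The identification of `Fin n` with the disjoint union of its first `r` and its last `n - r`
elements. -/
def blockEquiv {n r : ℕ} (hr : r ≤ n) : Fin r ⊕ Fin (n - r) ≃ Fin n :=
  finSumFinEquiv.trans (finCongr (Nat.add_sub_of_le hr))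

theorem blockEquiv_inl {n r : ℕ} (hr : r ≤ n) (i : Fin r) :
    blockEquiv hr (Sum.inl i) = ⟨i, by omega⟩ :=
  rfl

theorem blockEquiv_inr {n r : ℕ} (hr : r ≤ n) (j : Fin (n - r)) :
    blockEquiv hr (Sum.inr j) = ⟨r + j, by omega⟩ :=
  rfl

/-- The embedding of `S_r × S_{n-r}` into `S_n` as the Young subgroup preserving the first `r` and
the last `n - r` elements. -/
def youngHom {n r : ℕ} (hr : r ≤ n) :
    Equiv.Perm (Fin r) × Equiv.Perm (Fin (n - r)) →* Equiv.Perm (Fin n) :=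
  (blockEquiv hr).permCongrHom.toMonoidHom.comp (Equiv.Perm.sumCongrHom _ _)

theorem youngHom_apply {n r : ℕ} (hr : r ≤ n)
    (a : Equiv.Perm (Fin r) × Equiv.Perm (Fin (n - r))) (z : Fin r ⊕ Fin (n - r)) :
    youngHom hr a (blockEquiv hr z) = blockEquiv hr (Sum.map a.1 a.2 z) := by
  simp [youngHom, Equiv.permCongr_apply]

theorem youngHom_injective {n r : ℕ} (hr : r ≤ n) : Function.Injective (youngHom hr) :=
  (blockEquiv hr).permCongrHom.injective.comp Equiv.Perm.sumCongrHom_injective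

theorem youngHom_swap_one {n r : ℕ} (hr : r ≤ n) (i j : Fin r) :
    youngHom hr (Equiv.swap i j, 1) =
      Equiv.swap (blockEquiv hr (Sum.inl i)) (blockEquiv hr (Sum.inl j)) := by
  rw [← Equiv.symm_trans_swap_trans, ← Equiv.Perm.sumCongr_swap_one]
  rfl

theorem youngHom_one_swap {n r : ℕ} (hr : r ≤ n) (i j : Fin (n - r)) :
    youngHom hr (1, Equiv.swap i j) =
      Equiv.swap (blockEquiv hr (Sum.inr i)) (blockEquiv hr (Sum.inr j)) := by
  rw [← Equiv.symm_trans_swap_trans, ← Equiv.Perm.sumCongr_one_swap]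
  rfl

theorem mem_range_youngHom {n r : ℕ} (hr : r ≤ n) (σ : Equiv.Perm (Fin n)) :
    σ ∈ (youngHom hr).range ↔ ∀ x : Fin n, (x : ℕ) < r ↔ (σ x : ℕ) < r := by
  constructor
  · rintro ⟨a, rfl⟩ x
    obtain ⟨z, rfl⟩ := (blockEquiv hr).surjective x
    rw [youngHom_apply]
    cases z <;> simp [blockEquiv_inl, blockEquiv_inr]
  · intro hσ
    have hmaps : Set.MapsTo ((blockEquiv hr).symm.permCongr σ) (Set.range Sum.inl)
        (Set.range Sum.inl) := by
      rintro _ ⟨i, rfl⟩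
      have hlt : (σ (blockEquiv hr (Sum.inl i)) : ℕ) < r := (hσ _).1 i.isLt
      obtain ⟨z, hz⟩ := (blockEquiv hr).surjective (σ (blockEquiv hr (Sum.inl i)))
      rw [Equiv.permCongr_apply, Equiv.symm_symm, ← hz, Equiv.symm_apply_apply]
      rw [← hz] at hlt
      cases z with
      | inl k => exact ⟨k, rfl⟩
      | inr k => simp [blockEquiv_inr] at hlt
    obtain ⟨a, ha⟩ := Equiv.Perm.mem_sumCongrHom_range_of_perm_mapsTo_inl hmaps
    refine ⟨a, ?_⟩
    rw [youngHom, MonoidHom.comp_apply, ha]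
    ext x
    simp [Equiv.permCongr_apply]

theorem sum_preserving_eq_sum_young {M : Type*} [AddCommMonoid M] {n r : ℕ} (hr : r ≤ n)
    (f : Equiv.Perm (Fin n) → M) :
    ∑ σ : Equiv.Perm (Fin n) with ∀ x : Fin n, (x : ℕ) < r ↔ (σ x : ℕ) < r, f σ =
      ∑ a, f (youngHom hr a) := by
  refine (Finset.sum_bij (fun a _ => youngHom hr a) (fun a _ => ?_)
    (fun a _ b _ h => youngHom_injective hr h) (fun σ hσ => ?_) fun _ _ => rfl).symm
  · exact (Finset.mem_filter_univ _).2 ((mem_range_youngHom hr _).1 ⟨a, rfl⟩)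
  · obtain ⟨a, rfl⟩ := (mem_range_youngHom hr σ).2 ((Finset.mem_filter_univ _).1 hσ)
    exact ⟨a, Finset.mem_univ _, rfl⟩

end YoungSubgroup

theorem sum_DPlus_action_eq_factorial_general {𝕜 K : Type*} [Field 𝕜] [Field K] [CharZero K]
    [Algebra 𝕜 K] {n r : ℕ} (hr : r ≤ n) {x : Fin n → K} (hx : Function.Injective x)
    (t : Equiv.Perm (Fin n) →* (K ≃ₐ[𝕜] K)) (ht : ∀ σ i, t σ (x i) = x (σ i))
    (Φ : Equiv.Perm (Fin n) →* Module.End 𝕜 K)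
    (hΦ : ∀ (i : ℕ) (hi : i + 1 < n),
      Φ (Equiv.swap ⟨i, Nat.lt_of_succ_lt hi⟩ ⟨i + 1, hi⟩) =
        demazurePlusAux 𝕜 K (t (Equiv.swap ⟨i, Nat.lt_of_succ_lt hi⟩ ⟨i + 1, hi⟩))
          (x ⟨i + 1, hi⟩ - x ⟨i, Nat.lt_of_succ_lt hi⟩)) :
    ∑ π : Equiv.Perm (Fin n) with ∀ i : Fin n, (i : ℕ) < r ↔ (π i : ℕ) < r,
      Φ π (∑ lam : Fin r → Fin (n - r + 1) with ∀ a b, a ≤ b → (lam b : ℕ) ≤ (lam a : ℕ),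
        ∏ i : Fin r, ∏ j : Fin (n - r),
          (1 + (if (j : ℕ) < (lam i : ℕ) then (1 : K) else -1) *
            (x ⟨r - 1 - (i : ℕ), by omega⟩ - x ⟨r + (j : ℕ), by omega⟩)⁻¹)) =
      (n.factorial : K) := by
  let y (i : Fin r) : K := x (blockEquiv hr (Sum.inl i))
  let z (j : Fin (n - r)) : K := x (blockEquiv hr (Sum.inr j))
  have hyz : Function.Injective (Sum.elim y z) := by
    convert hx.comp (blockEquiv hr).injective using 1
    exact Sum.elim_comp_inl_inr (x ∘ blockEquiv hr)
  have hrev (i : Fin r) : x ⟨r - 1 - i, by omega⟩ = y i.rev :=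
    congrArg x (Fin.ext (show r - 1 - i = r - (i + 1) by omega))
  have hswap {i j : Fin n} (hij : (i : ℕ) + 1 = j) :
      Φ (Equiv.swap i j) = demazurePlusAux 𝕜 K (t (Equiv.swap i j)) (x j - x i) := by
    obtain ⟨j, hj⟩ := j
    subst hij
    exact hΦ i hj
  have hmain := sum_demazure_apply_shuffleSum (t := t.comp (youngHom hr))
    (Ψ := Φ.comp (youngHom hr)) hyz (fun a i => by simp [y, ht, youngHom_apply])
    (fun a j => by simp [z, ht, youngHom_apply])
    (fun i j hij => by
      simp only [MonoidHom.comp_apply, youngHom_swap_one]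
      exact hswap (by simpa [blockEquiv_inl] using hij))
    (fun i j hij => by
      simp only [MonoidHom.comp_apply, youngHom_one_swap]
      exact hswap (by simpa [blockEquiv_inr, add_assoc] using hij))
  rw [Nat.add_sub_of_le hr] at hmain
  rw [sum_preserving_eq_sum_young hr, ← hmain]
  simp only [hrev]
  exact Finset.sum_congr rfl fun a _ => congrArg _ (sum_antitone_eq_shuffleSum y z)

section RatVar

variable {𝕜 : Type*} [Field 𝕜] {n : ℕ} {K : Type*} [Field K]
  [Algebra (MvPolynomial (Fin n) 𝕜) K] [IsFractionRing (MvPolynomial (Fin n) 𝕜) K]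

theorem ratVar_injective : Function.Injective (ratVar 𝕜 n K) :=
  (IsFractionRing.injective (MvPolynomial (Fin n) 𝕜) K).comp X_injective

variable [Algebra 𝕜 K] [IsScalarTower 𝕜 (MvPolynomial (Fin n) 𝕜) K]

theorem algEquiv_ext_ratVar {φ ψ : K ≃ₐ[𝕜] K}
    (h : ∀ i, φ (ratVar 𝕜 n K i) = ψ (ratVar 𝕜 n K i)) : φ = ψ := by
  have halg : (φ : K →ₐ[𝕜] K) = ψ :=
    IsLocalization.algHom_ext (nonZeroDivisors (MvPolynomial (Fin n) 𝕜))
      (MvPolynomial.algHom_ext h)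
  exact AlgEquiv.coe_toAlgHom_injective halg

theorem exists_monoidHom_coe_eq {s : Equiv.Perm (Fin n) → (K ≃ₐ[𝕜] K)}
    (hs : ∀ σ i, s σ (ratVar 𝕜 n K i) = ratVar 𝕜 n K (σ i)) :
    ∃ t : Equiv.Perm (Fin n) →* (K ≃ₐ[𝕜] K), ⇑t = s :=
  ⟨{ toFun := s
     map_one' := algEquiv_ext_ratVar (n := n) fun i => by simp [hs]
     map_mul' := fun σ τ => algEquiv_ext_ratVar (n := n) fun i => by simp [hs] }, rfl⟩

end RatVar

/-- Fix `0 ≤ r ≤ n` and let `Φ : Sₙ → End_𝕜(K)` be any monoid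
homomorphism sending each simple transposition to the corresponding operator `Dᵢ⁺`.
Summing, over all `π` in the Young subgroup `S_r × S_{n−r}` of `Sₙ` (those permutations
preserving both blocks of indices), the value of `Φ π` on
`∑_{λ ∈ P_{r,n}} ∏_{i=1}^{r} ∏_{j=1}^{n−r} (1 + ε_{i,j}(λ)·y_{i,j})` gives `n!`.
Here (in the `1`-indexed notation of the paper) `λ` runs over partitions fitting in an
`r × (n−r)` box, `ε_{i,j}(λ) = 1` if `j ≤ λᵢ` and `−1` otherwise, and
`y_{i,j} = (x_{r+1−i} − x_{r+j})⁻¹`; below everything is `0`-indexed. -/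
theorem sum_DPlus_action_eq_factorial
    (𝕜 : Type*) [Field 𝕜] [CharZero 𝕜] (n r : ℕ) (hn : 1 ≤ n) (hr : r ≤ n)
    (K : Type*) [Field K] [Algebra 𝕜 K] [Algebra (MvPolynomial (Fin n) 𝕜) K]
    [IsScalarTower 𝕜 (MvPolynomial (Fin n) 𝕜) K]
    [IsFractionRing (MvPolynomial (Fin n) 𝕜) K]
    (s : Equiv.Perm (Fin n) → (K ≃ₐ[𝕜] K))
    (hs : ∀ (σ : Equiv.Perm (Fin n)) (i : Fin n), s σ (ratVar 𝕜 n K i) = ratVar 𝕜 n K (σ i))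
    (Φ : Equiv.Perm (Fin n) →* Module.End 𝕜 K)
    (hΦ : ∀ (i : ℕ) (hi : i + 1 < n),
      Φ (Equiv.swap ⟨i, Nat.lt_of_succ_lt hi⟩ ⟨i + 1, hi⟩) = DPlus 𝕜 K s i hi) :
    ∑ π ∈ Finset.univ.filter
        (fun σ : Equiv.Perm (Fin n) => ∀ x : Fin n, ((x : ℕ) < r ↔ ((σ x : ℕ) < r))),
      Φ π (∑ lam ∈ Finset.univ.filter
          (fun lam : Fin r → Fin (n - r + 1) =>
            ∀ a b : Fin r, a ≤ b → (lam b : ℕ) ≤ (lam a : ℕ)),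
        ∏ i : Fin r, ∏ j : Fin (n - r),
          (1 + (if (j : ℕ) < (lam i : ℕ) then (1 : K) else -1) *
            (ratVar 𝕜 n K ⟨r - 1 - (i : ℕ), by have := i.isLt; omega⟩ -
              ratVar 𝕜 n K ⟨r + (j : ℕ), by have := j.isLt; omega⟩)⁻¹)) =
      (n.factorial : K) := by
  obtain ⟨t, rfl⟩ := exists_monoidHom_coe_eq hs
  have : CharZero K := charZero_of_injective_algebraMap (algebraMap 𝕜 K).injective
  exact sum_DPlus_action_eq_factorial_general hr ratVar_injective t hs Φ hΦ
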